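/- arXiv:1408.1449 — 6 statements merged into one kernel-verified Lean document; each statement's English description precedes it below -/
import Mathlib

section
/- Let K be a field of characteristic zero (e.g. ℂ), let n ≥ 1, and let V be the K-vector space with basis {b_1, …, b_n, a_1, …, a_n}. In the exterior algebra Λ(V), for an n × n matrix M with entries in K, set ω = Σ_{i,j} M_{ij} · b_i ∧ a_j (a degree-2 element). Then ω^n = n! · (det M) · (b_1 ∧ a_1 ∧ b_2 ∧ a_2 ∧ ⋯ ∧ b_n ∧ a_n). (This is the exterior-algebra form of the fermionic Gaussian integral ∫ dψ dψ̄ e^{ψ̄ M ψ} = det M: the Berezin integral extracts the coefficient of the top monomial.) -/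
open ExteriorAlgebra

theorem fgi_add_pow {B : Type*} [CommRing B] (y S : B) (h : y * y = 0) (k : ℕ) :
    (y + S) ^ (k + 1) = S ^ (k + 1) + ((k + 1 : ℕ) : B) * (y * S ^ k) := by
  induction k with
  | zero => simp [add_comm]
  | succ k ih =>
    rw [pow_succ, ih]
    push_cast
    linear_combination ((k + 1 : B) * S ^ k) * h

theorem fgi_sum_pow {B ι' : Type*} [CommRing B] (y : ι' → B) (h : ∀ i, y i * y i = 0)
    (s : Finset ι') : (∑ i ∈ s, y i) ^ s.card = (s.card.factorial : B) * ∏ i ∈ s, y i := by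
  classical
  induction s using Finset.induction_on with
  | empty => simp
  | insert i s hi ih =>
    have h0 : (∑ i ∈ s, y i) ^ (s.card + 1) = 0 := by
      rw [pow_succ, ih, Finset.mul_sum]
      refine Finset.sum_eq_zero fun j hj => ?_
      rw [← Finset.mul_prod_erase s y hj]
      linear_combination ((s.card.factorial : B) * ∏ x ∈ s.erase j, y x) * h j
    rw [Finset.sum_insert hi, Finset.card_insert_of_notMem hi, Finset.prod_insert hi,
      fgi_add_pow _ _ (h i), h0, ih, Nat.factorial_succ]
    push_cast
    ring

theorem fgi_exists.{v} {K : Type*} {A : Type v} [Field K] [Ring A] [Algebra K A] {n : ℕ}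
    (x : Fin n → A) (hc : ∀ i j, x i * x j = x j * x i) :
    ∃ (B : Type v) (_ : CommRing B) (φ : B →+* A) (y : Fin n → B), Function.Injective φ ∧
      ∀ i, φ (y i) = x i := by
  have hc' : ∀ a ∈ Set.range x, ∀ b ∈ Set.range x, a * b = b * a := by
    rintro _ ⟨i, rfl⟩ _ ⟨j, rfl⟩
    exact hc i j
  let _ := Algebra.adjoinCommRingOfComm K hc'
  exact ⟨Algebra.adjoin K (Set.range x), inferInstance,
    ⟨⟨⟨Subtype.val, rfl⟩, fun _ _ => rfl⟩, rfl, fun _ _ => rfl⟩,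
    fun i => ⟨x i, Algebra.subset_adjoin ⟨i, rfl⟩⟩, Subtype.val_injective, fun _ => rfl⟩

theorem fgi_pow {K A : Type*} [Field K] [Ring A] [Algebra K A] {n : ℕ} (x : Fin n → A)
    (hc : ∀ i j, x i * x j = x j * x i) (h : ∀ i, x i * x i = 0) :
    (∑ i, x i) ^ n = (n.factorial : A) * (List.ofFn x).prod := by
  obtain ⟨B, _, φ, y, hφ, hy⟩ := fgi_exists (K := K) x hc
  have := fgi_sum_pow y (fun i => hφ (by simp [hy, h])) Finset.univ
  rw [Finset.card_univ, Fintype.card_fin, ← List.prod_ofFn] at this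
  have := congrArg φ this
  simp only [map_pow, map_sum, map_mul, map_natCast, map_list_prod, List.map_ofFn, hy] at this
  rw [this]
  congr 3
  funext i
  exact hy i

theorem fgi_zero {K A : Type*} [Field K] [Ring A] [Algebra K A] {n : ℕ} (x : Fin n → A)
    (hc : ∀ i j, x i * x j = x j * x i) (i j : Fin n) (hij : i ≠ j) (h : x i * x j = 0) :
    (List.ofFn x).prod = 0 := by
  obtain ⟨B, _, φ, y, hφ, hy⟩ := fgi_exists (K := K) x hc
  have h1 : y i * y j = 0 := hφ (by simp [hy, h])
  have : (List.ofFn y).prod = 0 := by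
    rw [List.prod_ofFn, ← Finset.mul_prod_erase _ y (Finset.mem_univ i),
      ← Finset.mul_prod_erase _ y (Finset.mem_erase.2 ⟨hij.symm, Finset.mem_univ j⟩),
      ← mul_assoc, h1, zero_mul]
  have := congrArg φ this
  rw [map_list_prod, List.map_ofFn, map_zero] at this
  rw [← this]
  congr 2
  funext i
  exact (hy i).symm

theorem fgi_anti {K V : Type*} [Field K] [AddCommGroup V] [Module K V] (u v : V) :
    ι K u * ι K v = - (ι K v * ι K u) :=
  eq_neg_of_add_eq_zero_left (ι_add_mul_swap u v)

theorem fgi_comm {K V : Type*} [Field K] [AddCommGroup V] [Module K V] (p q r s : V) :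
    (ι K p * ι K q) * (ι K r * ι K s) = (ι K r * ι K s) * (ι K p * ι K q) := by
  have e1 : (ι K p * ι K q) * (ι K r * ι K s) = ι K p * (ι K q * ι K r) * ι K s := by
    noncomm_ring
  rw [e1, fgi_anti q r]
  have e2 : ι K p * -(ι K r * ι K q) * ι K s = - ((ι K p * ι K r) * (ι K q * ι K s)) := by
    noncomm_ring
  rw [e2, fgi_anti p r, fgi_anti q s]
  have e3 : -(-(ι K r * ι K p) * -(ι K s * ι K q)) = - (ι K r * (ι K p * ι K s) * ι K q) := by
    noncomm_ring
  rw [e3, fgi_anti p s]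
  noncomm_ring

theorem fgi_mul_zero {K V : Type*} [Field K] [AddCommGroup V] [Module K V] (p q r : V) :
    (ι K p * ι K q) * (ι K r * ι K q) = 0 := by
  rw [fgi_anti r q, mul_neg, mul_assoc, ← mul_assoc (ι K q), ι_sq_zero]
  simp

/-- The alternating map sending `c` to `b_1 c_1 ... b_n c_n`. -/
noncomputable def fgiAlt {K V : Type*} [Field K] [AddCommGroup V] [Module K V] {n : ℕ}
    (b : Fin n → V) : V [⋀^Fin n]→ₗ[K] ExteriorAlgebra K V :=
  { (MultilinearMap.mkPiAlgebraFin K n (ExteriorAlgebra K V)).compLinearMap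
      (fun i => (LinearMap.mulLeft K (ι K (b i))).comp (ι K)) with
    map_eq_zero_of_eq' := by
      intro v i j hv hij
      simp only [MultilinearMap.toFun_eq_coe, MultilinearMap.compLinearMap_apply,
        MultilinearMap.mkPiAlgebraFin_apply]
      refine fgi_zero (K := K) _ (fun i j => ?_) i j hij ?_
      · exact fgi_comm _ _ _ _
      · simp only [LinearMap.comp_apply, LinearMap.mulLeft_apply, hv]
        exact fgi_mul_zero _ _ _ }

theorem fgiAlt_apply {K V : Type*} [Field K] [AddCommGroup V] [Module K V] {n : ℕ}
    (b c : Fin n → V) : fgiAlt (K := K) b c = (List.ofFn fun i => ι K (b i) * ι K (c i)).prod := by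
  change ((MultilinearMap.mkPiAlgebraFin K n (ExteriorAlgebra K V)).compLinearMap
      (fun i => (LinearMap.mulLeft K (ι K (b i))).comp (ι K))) c = _
  rw [MultilinearMap.compLinearMap_apply, MultilinearMap.mkPiAlgebraFin_apply]
  rfl

/-- The exterior-algebra form of the fermionic Gaussian integral
`∫ dψ dψ̄ e^{ψ̄ M ψ} = det M`: for `ω = Σ_{i,j} M i j • (b i ∧ a j)` in the exterior
algebra on a space with basis `b_1, …, b_n, a_1, …, a_n`, we have
`ω ^ n = n! · det M · (b_1 ∧ a_1 ∧ ⋯ ∧ b_n ∧ a_n)`. -/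
theorem fermionic_gaussian_integral
    (K : Type*) [Field K] [CharZero K] (n : ℕ) (hn : 1 ≤ n)
    (M : Matrix (Fin n) (Fin n) K)
    (b a : Fin n → ((Fin n ⊕ Fin n) → K))
    (hb : ∀ i, b i = Pi.single (Sum.inl i) 1)
    (ha : ∀ i, a i = Pi.single (Sum.inr i) 1)
    (ω : ExteriorAlgebra K ((Fin n ⊕ Fin n) → K))
    (hω : ω = ∑ i : Fin n, ∑ j : Fin n,
        M i j • (ι K (b i) * ι K (a j))) :
    ω ^ n = ((n.factorial : K) * M.det) •
      ((List.finRange n).map (fun i => ι K (b i) * ι K (a i))).prod := by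
  have key : ω = ∑ i, ι K (b i) * ι K (∑ j, M i j • a j) := by
    rw [hω]
    refine Finset.sum_congr rfl fun i _ => ?_
    simp [map_sum, Finset.mul_sum]
  have hdet : fgiAlt (K := K) b (fun i => ∑ j, M i j • a j) = M.det • fgiAlt (K := K) b a := by
    let L : (Fin n → K) →ₗ[K] ((Fin n ⊕ Fin n) → K) := Fintype.linearCombination K a
    have hL : ∀ i, L (Pi.basisFun K (Fin n) i) = a i := by
      intro i
      simp [L, Fintype.linearCombination_apply_single]
    have h1 : (fgiAlt (K := K) b).compLinearMap L =
        (LinearMap.toSpanSingleton K _ (fgiAlt (K := K) b a)).compAlternatingMap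
          (Pi.basisFun K (Fin n)).det := by
      refine Module.Basis.ext_alternating (Pi.basisFun K (Fin n)) fun i h => ?_
      let σ : Equiv.Perm (Fin n) := Equiv.ofBijective i (Finite.injective_iff_bijective.1 h)
      change (fgiAlt (K := K) b).compLinearMap L (Pi.basisFun K (Fin n) ∘ σ) =
        (LinearMap.toSpanSingleton K _ (fgiAlt (K := K) b a)).compAlternatingMap
          (Pi.basisFun K (Fin n)).det (Pi.basisFun K (Fin n) ∘ σ)
      rw [AlternatingMap.map_perm, AlternatingMap.map_perm]
      congr 1
      rw [LinearMap.compAlternatingMap_apply, Module.Basis.det_self,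
        LinearMap.toSpanSingleton_apply, one_smul, AlternatingMap.compLinearMap_apply]
      congr 1
      funext i
      exact hL i
    have h2 := congrArg (fun f => f (fun i => M i)) h1
    simp only [LinearMap.compAlternatingMap_apply, LinearMap.toSpanSingleton_apply,
      AlternatingMap.compLinearMap_apply, Pi.basisFun_det_apply] at h2
    exact h2
  rw [key, fgi_pow (K := K) _ (fun _ _ => fgi_comm _ _ _ _) (fun _ => fgi_mul_zero _ _ _),
    ← fgiAlt_apply, hdet, fgiAlt_apply, List.ofFn_eq_map, mul_smul, ← map_natCast (algebraMap K _),
    ← Algebra.smul_def]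
end

section
/- Let n ≥ 1, N ≥ 1, l > 0, and set Δt = l/N. For i = 0, …, N−1 let S_i and R_i be real orthogonal n × n matrices, and let φ_0, φ_N ∈ ℝ^n. Then (2πΔt)^{−Nn/2} ∫_{(ℝ^n)^{N−1}} exp(−(1/(2Δt)) Σ_{i=0}^{N−1} ‖S_i φ_i − R_i φ_{i+1}‖²) dφ_1 ⋯ dφ_{N−1} = (2πl)^{−n/2} exp(−(1/(2l)) ‖G_{N−1} G_{N−2} ⋯ G_0 φ_0 − φ_N‖²), where G_i = R_iᵀ S_i. (This is the triangulation independence of the scalar-field state sum on an interval of length l triangulated with N edges: the result depends only on l and the total holonomy G_{N−1}⋯G_0, not on N.) -/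
open Real MeasureTheory Matrix

/-- The sequence of vertex variables `φ_0, φ_1, …, φ_N` on the interval, where the
boundary values `φ_0` and `φ_N` are fixed and the interior values are given by `ψ`. -/
noncomputable def vertexField (n N : ℕ) (φ₀ φN : Fin n → ℝ)
    (ψ : Fin (N - 1) → Fin n → ℝ) (i : Fin (N + 1)) : Fin n → ℝ :=
  if _h0 : (i : ℕ) = 0 then φ₀
  else if _hN : (i : ℕ) = N then φN
  else ψ ⟨(i : ℕ) - 1, by have := i.isLt; omega⟩

lemma ssi_sq_identity {s t : ℝ} (hs : 0 < s) (ht : 0 < t) (a b x : ℝ) :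
    -(1 / (2 * s)) * (a - x) ^ 2 + -(1 / (2 * t)) * (x - b) ^ 2
      = -((s + t) / (2 * s * t)) * (x - (t * a + s * b) / (s + t)) ^ 2
        + -(1 / (2 * (s + t))) * (a - b) ^ 2 := by
  have : s + t ≠ 0 := by positivity
  field_simp
  ring

lemma ssi_gauss1 {s t : ℝ} (hs : 0 < s) (ht : 0 < t) (a b : ℝ) :
    Integrable (fun x : ℝ => Real.exp (-(1 / (2 * s)) * (a - x) ^ 2 + -(1 / (2 * t)) * (x - b) ^ 2)) ∧
    ∫ x : ℝ, Real.exp (-(1 / (2 * s)) * (a - x) ^ 2 + -(1 / (2 * t)) * (x - b) ^ 2)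
      = √(2 * π * s) * √(2 * π * t) * (√(2 * π * (s + t)))⁻¹ *
        Real.exp (-(1 / (2 * (s + t))) * (a - b) ^ 2) := by
  have hb : 0 < (s + t) / (2 * s * t) := by positivity
  simp_rw [ssi_sq_identity hs ht, Real.exp_add]
  constructor
  · exact ((integrable_exp_neg_mul_sq hb).comp_sub_right _).mul_const _
  · rw [integral_mul_const,
      integral_sub_right_eq_self (fun x : ℝ => Real.exp (-((s + t) / (2 * s * t)) * x ^ 2)),
      integral_gaussian]
    congr 1
    rw [← Real.sqrt_mul (by positivity), ← Real.sqrt_inv, ← Real.sqrt_mul (by positivity)]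
    congr 1
    field_simp

lemma ssi_gaussn (n : ℕ) {s t : ℝ} (hs : 0 < s) (ht : 0 < t) (a b : Fin n → ℝ) :
    ∫⁻ x : Fin n → ℝ, ENNReal.ofReal
        (Real.exp (-(1 / (2 * s)) * ∑ k, (a k - x k) ^ 2 + -(1 / (2 * t)) * ∑ k, (x k - b k) ^ 2))
      = ENNReal.ofReal (√(2 * π * s) ^ n * √(2 * π * t) ^ n * (√(2 * π * (s + t)) ^ n)⁻¹ *
        Real.exp (-(1 / (2 * (s + t))) * ∑ k, (a k - b k) ^ 2)) := by
  have h : ∀ x : Fin n → ℝ,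
      Real.exp (-(1 / (2 * s)) * ∑ k, (a k - x k) ^ 2 + -(1 / (2 * t)) * ∑ k, (x k - b k) ^ 2)
      = ∏ k, (fun y : ℝ => Real.exp (-(1 / (2 * s)) * (a k - y) ^ 2 + -(1 / (2 * t)) * (y - b k) ^ 2)) (x k) := by
    intro x
    rw [← Real.exp_sum, Finset.sum_add_distrib, Finset.mul_sum, Finset.mul_sum]
  simp_rw [h]
  rw [← ofReal_integral_eq_lintegral_ofReal]
  · rw [integral_fintype_prod_volume_eq_prod
      (fun k => fun y : ℝ => Real.exp (-(1 / (2 * s)) * (a k - y) ^ 2 + -(1 / (2 * t)) * (y - b k) ^ 2))]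
    congr 1
    simp_rw [(ssi_gauss1 hs ht _ _).2]
    rw [Finset.prod_mul_distrib, ← Real.exp_sum, Finset.mul_sum]
    simp [mul_pow]
  · exact Integrable.fintype_prod (fun k => (ssi_gauss1 hs ht (a k) (b k)).1)
  · exact Filter.Eventually.of_forall fun x => Finset.prod_nonneg fun k _ => (Real.exp_pos _).le

lemma ssi_norm {n : ℕ} (A : Matrix (Fin n) (Fin n) ℝ) (hA : Aᵀ * A = 1) (v w : Fin n → ℝ) :
    ∑ k, (A.mulVec v k - w k) ^ 2 = ∑ k, (v k - Aᵀ.mulVec w k) ^ 2 := by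
  have hA' : A * Aᵀ = 1 := mul_eq_one_comm.mp hA
  have key : ∀ u : Fin n → ℝ, ∑ k, (A.mulVec u k) ^ 2 = ∑ k, u k ^ 2 := by
    intro u
    have e : ∀ z : Fin n → ℝ, ∑ k, z k ^ 2 = z ⬝ᵥ z := by
      intro z; simp [dotProduct, sq]
    rw [e, e, dotProduct_mulVec, ← mulVec_transpose, mulVec_mulVec, hA, one_mulVec]
  have := key (v - Aᵀ.mulVec w)
  rw [mulVec_sub, mulVec_mulVec, hA', one_mulVec] at this
  simpa using this

/-- The action. -/
noncomputable def ssiAct (n m : ℕ) (S R : Fin (m + 1) → Matrix (Fin n) (Fin n) ℝ)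
    (a b : Fin n → ℝ) (ψ : Fin m → Fin n → ℝ) : ℝ :=
  ∑ i : Fin (m + 1), ∑ k, ((S i).mulVec (vertexField n (m + 1) a b ψ i.castSucc) k
            - (R i).mulVec (vertexField n (m + 1) a b ψ i.succ) k) ^ 2

lemma ssi_vf_cont (n m : ℕ) (b : Fin n → ℝ) (i : Fin (m + 2)) :
    Continuous (fun p : (Fin n → ℝ) × (Fin m → Fin n → ℝ) => vertexField n (m + 1) p.1 b p.2 i) := by
  unfold vertexField
  split_ifs <;> fun_prop

lemma ssiAct_cont (n m : ℕ) (S R : Fin (m + 1) → Matrix (Fin n) (Fin n) ℝ) (b : Fin n → ℝ) :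
    Continuous (fun p : (Fin n → ℝ) × (Fin m → Fin n → ℝ) => ssiAct n m S R p.1 b p.2) := by
  unfold ssiAct
  refine continuous_finsetSum _ fun i _ => continuous_finsetSum _ fun k _ => ?_
  have h1 := (continuous_apply k).comp
    (Continuous.matrix_mulVec (continuous_const (y := S i)) (ssi_vf_cont n m b i.castSucc))
  have h2 := (continuous_apply k).comp
    (Continuous.matrix_mulVec (continuous_const (y := R i)) (ssi_vf_cont n m b i.succ))
  exact (h1.sub h2).pow 2

lemma ssiAct_succ (n m : ℕ) (S R : Fin (m + 2) → Matrix (Fin n) (Fin n) ℝ)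
    (a b : Fin n → ℝ) (ψ : Fin (m + 1) → Fin n → ℝ) :
    ssiAct n (m + 1) S R a b ψ =
      ∑ k, ((S 0).mulVec a k - (R 0).mulVec (ψ 0) k) ^ 2
        + ssiAct n m (fun i => S i.succ) (fun i => R i.succ) (ψ 0) b (fun j => ψ j.succ) := by
  have hv : ∀ i : Fin (m + 2), vertexField n (m + 1 + 1) a b ψ i.succ
      = vertexField n (m + 1) (ψ 0) b (fun j => ψ j.succ) i := by
    intro i
    unfold vertexField
    by_cases h0 : (i : ℕ) = 0
    · have : i = 0 := Fin.ext h0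
      subst this
      simp
    · by_cases h1 : (i : ℕ) = m + 1
      · simp [h1]
      · simp only [Fin.val_succ, h0, h1, Nat.add_right_cancel_iff, dite_false]
        rw [dif_neg (by omega)]
        congr 1
        ext
        simp
        omega
  unfold ssiAct
  rw [Fin.sum_univ_succ]
  congr 1
  refine Finset.sum_congr rfl fun i _ => ?_
  rw [hv, ← Fin.succ_castSucc, hv]
  rfl

/-- Holonomy. -/
noncomputable def ssiHol (n N : ℕ) (S R : Fin N → Matrix (Fin n) (Fin n) ℝ) :
    Matrix (Fin n) (Fin n) ℝ :=
  ((List.finRange N).reverse.map (fun i => (R i)ᵀ * S i)).prod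

lemma ssiHol_succ (n N : ℕ) (S R : Fin (N + 1) → Matrix (Fin n) (Fin n) ℝ) :
    ssiHol n (N + 1) S R
      = ssiHol n N (fun i => S i.succ) (fun i => R i.succ) * ((R 0)ᵀ * S 0) := by
  unfold ssiHol
  rw [List.finRange_succ]
  simp [Function.comp_def, List.map_reverse]

lemma ssiHol_orth (n N : ℕ) (S R : Fin N → Matrix (Fin n) (Fin n) ℝ)
    (hS : ∀ i, (S i)ᵀ * S i = 1) (hR : ∀ i, (R i)ᵀ * R i = 1) :
    (ssiHol n N S R)ᵀ * ssiHol n N S R = 1 := by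
  induction N with
  | zero => simp [ssiHol]
  | succ N ih =>
    have h := ih (fun i => S i.succ) (fun i => R i.succ) (fun i => hS _) (fun i => hR _)
    rw [ssiHol_succ]
    have hR' : R 0 * (R 0)ᵀ = 1 := mul_eq_one_comm.mp (hR 0)
    generalize ssiHol n N (fun i => S i.succ) (fun i => R i.succ) = H at h
    rw [transpose_mul, transpose_mul, transpose_transpose]
    calc (S 0)ᵀ * R 0 * Hᵀ * (H * ((R 0)ᵀ * S 0))
        = (S 0)ᵀ * R 0 * (Hᵀ * H) * ((R 0)ᵀ * S 0) := by simp only [Matrix.mul_assoc]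
      _ = (S 0)ᵀ * (R 0 * (R 0)ᵀ) * S 0 := by rw [h]; simp only [Matrix.mul_assoc, Matrix.one_mul]
      _ = 1 := by rw [hR', Matrix.mul_one, hS]

lemma ssi_edge {n : ℕ} (S R : Matrix (Fin n) (Fin n) ℝ) (hR : Rᵀ * R = 1) (a x : Fin n → ℝ) :
    ∑ k, (S.mulVec a k - R.mulVec x k) ^ 2 = ∑ k, ((Rᵀ * S).mulVec a k - x k) ^ 2 := by
  have h := ssi_norm R hR x (S.mulVec a)
  rw [mulVec_mulVec] at h
  calc _ = ∑ k, (R.mulVec x k - S.mulVec a k) ^ 2 := Finset.sum_congr rfl fun k _ => by ring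
    _ = _ := h
    _ = _ := Finset.sum_congr rfl fun k _ => by ring

lemma ssi_main (n : ℕ) (d : ℝ) (hd : 0 < d) (b : Fin n → ℝ) (m : ℕ) :
    ∀ (S R : Fin (m + 1) → Matrix (Fin n) (Fin n) ℝ) (_ : ∀ i, (S i)ᵀ * S i = 1)
      (_ : ∀ i, (R i)ᵀ * R i = 1) (a : Fin n → ℝ),
    ∫⁻ ψ : Fin m → Fin n → ℝ, ENNReal.ofReal (Real.exp (-(1 / (2 * d)) * ssiAct n m S R a b ψ))
      = ENNReal.ofReal ((√(2 * π * d) ^ n) ^ (m + 1) * (√(2 * π * ((m + 1 : ℕ) * d)) ^ n)⁻¹ *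
        Real.exp (-(1 / (2 * ((m + 1 : ℕ) * d))) *
          ∑ k, ((ssiHol n (m + 1) S R).mulVec a k - b k) ^ 2)) := by
  induction m with
  | zero =>
    intro S R hS hR a
    have hpos : 0 < √(2 * π * d) ^ n := by positivity
    rw [lintegral_unique]
    have hv : (volume : Measure (Fin 0 → Fin n → ℝ)) Set.univ = 1 := by
      simp [volume_pi]
    rw [hv, mul_one]
    congr 1
    have e : ∀ ψ, ssiAct n 0 S R a b ψ = ∑ k, ((ssiHol n (0 + 1) S R).mulVec a k - b k) ^ 2 := by
      intro ψ
      have : ssiHol n (0 + 1) S R = (R 0)ᵀ * S 0 := by simp [ssiHol, List.finRange_succ]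
      rw [this, ← ssi_edge _ _ (hR 0)]
      simp [ssiAct, vertexField]
    rw [e]
    simp [hpos.ne']
  | succ m ih =>
    intro S R hS hR a
    have hmp := (volume_preserving_piFinSuccAbove (fun _ : Fin (m + 1) => Fin n → ℝ) 0)
    have ih' := ih (fun i => S i.succ) (fun i => R i.succ) (fun i => hS _) (fun i => hR _)
    have hH := ssiHol_orth n (m + 1) _ _ (fun i => hS (Fin.succ i)) (fun i => hR (Fin.succ i))
    have hT : 0 < ((m + 1 : ℕ) : ℝ) * d := by positivity
    set F : (Fin n → ℝ) × (Fin m → Fin n → ℝ) → ENNReal := fun p =>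
      ENNReal.ofReal (Real.exp (-(1 / (2 * d)) *
        ∑ k, ((S 0).mulVec a k - (R 0).mulVec p.1 k) ^ 2)) *
      ENNReal.ofReal (Real.exp (-(1 / (2 * d)) *
        ssiAct n m (fun i => S i.succ) (fun i => R i.succ) p.1 b p.2)) with hF
    have hFm : Measurable F := by
      have h1 : Continuous fun p : (Fin n → ℝ) × (Fin m → Fin n → ℝ) =>
          ∑ k, ((S 0).mulVec a k - (R 0).mulVec p.1 k) ^ 2 := by
        refine continuous_finsetSum _ fun k _ => ?_
        have h2 := (continuous_apply k).comp
          (Continuous.matrix_mulVec (continuous_const (y := R 0))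
            (continuous_fst (X := Fin n → ℝ) (Y := Fin m → Fin n → ℝ)))
        exact (continuous_const.sub h2).pow 2
      have h3 := ssiAct_cont n m (fun i => S i.succ) (fun i => R i.succ) b
      exact ((Real.continuous_exp.comp (continuous_const.mul h1)).measurable.ennreal_ofReal).mul
        ((Real.continuous_exp.comp (continuous_const.mul h3)).measurable.ennreal_ofReal)
    have step1 : ∫⁻ ψ : Fin (m + 1) → Fin n → ℝ,
        ENNReal.ofReal (Real.exp (-(1 / (2 * d)) * ssiAct n (m + 1) S R a b ψ))
        = ∫⁻ p, F p := by
      rw [← hmp.lintegral_comp hFm]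
      refine lintegral_congr fun ψ => ?_
      rw [ssiAct_succ, mul_add, Real.exp_add, ENNReal.ofReal_mul (Real.exp_pos _).le]
      rfl
    have hF2 : ∀ x, ∫⁻ y, F (x, y) =
        ENNReal.ofReal ((√(2 * π * d) ^ n) ^ (m + 1) * (√(2 * π * ((m + 1 : ℕ) * d)) ^ n)⁻¹) *
        ENNReal.ofReal (Real.exp (-(1 / (2 * d)) *
            ∑ k, (((R 0)ᵀ * S 0).mulVec a k - x k) ^ 2 +
          -(1 / (2 * ((m + 1 : ℕ) * d))) *
          ∑ k, (x k - (ssiHol n (m + 1) (fun i => S i.succ) (fun i => R i.succ))ᵀ.mulVec b k) ^ 2)) := by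
      intro x
      simp only [hF]
      rw [lintegral_const_mul' _ _ ENNReal.ofReal_ne_top, ih' x, ssi_edge _ _ (hR 0),
        ssi_norm _ hH, ← ENNReal.ofReal_mul (by positivity), ← ENNReal.ofReal_mul (by positivity),
        Real.exp_add]
      congr 1
      ring
    rw [step1, Measure.volume_eq_prod, lintegral_prod _ hFm.aemeasurable]
    simp_rw [hF2]
    rw [lintegral_const_mul' _ _ ENNReal.ofReal_ne_top, ssi_gaussn n hd hT,
      ← ENNReal.ofReal_mul (by positivity), ssiHol_succ n (m + 1), ← mulVec_mulVec a _ ((R 0)ᵀ * S 0), ssi_norm _ hH]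
    have e : d + ((m + 1 : ℕ) : ℝ) * d = ((m + 1 + 1 : ℕ) : ℝ) * d := by push_cast; ring
    rw [e]
    have hpos : √(2 * π * ((m + 1 : ℕ) * d)) ^ n ≠ 0 := by positivity
    congr 1
    field_simp
    ring

lemma ssi_curry {X Y : Type*} [TopologicalSpace X] [TopologicalSpace Y] (f : X → Y → ℝ)
    (h : Continuous fun p : X × Y => f p.1 p.2) (a : X) : Continuous fun y => f a y :=
  h.comp (continuous_const.prodMk continuous_id : Continuous fun y : Y => (a, y))

lemma ssi_int (n m : ℕ) (d : ℝ) (hd : 0 < d) (a b : Fin n → ℝ)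
    (S R : Fin (m + 1) → Matrix (Fin n) (Fin n) ℝ) (hS : ∀ i, (S i)ᵀ * S i = 1)
      (hR : ∀ i, (R i)ᵀ * R i = 1) :
    ∫ ψ : Fin m → Fin n → ℝ, Real.exp (-(1 / (2 * d)) * ssiAct n m S R a b ψ)
      = (√(2 * π * d) ^ n) ^ (m + 1) * (√(2 * π * ((m + 1 : ℕ) * d)) ^ n)⁻¹ *
        Real.exp (-(1 / (2 * ((m + 1 : ℕ) * d))) *
          ∑ k, ((ssiHol n (m + 1) S R).mulVec a k - b k) ^ 2) := by
  have key := ssi_main n d hd b m S R hS hR a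
  have h0 : Continuous fun ψ : Fin m → Fin n → ℝ => ssiAct n m S R a b ψ :=
    ssi_curry (fun x ψ => ssiAct n m S R x b ψ) (ssiAct_cont n m S R b) a
  have hc : Continuous fun ψ : Fin m → Fin n → ℝ =>
      Real.exp (-(1 / (2 * d)) * ssiAct n m S R a b ψ) := by
    generalize ssiAct n m S R a b = f at h0
    fun_prop
  have hm : AEStronglyMeasurable (fun ψ : Fin m → Fin n → ℝ =>
      Real.exp (-(1 / (2 * d)) * ssiAct n m S R a b ψ)) volume := hc.measurable.aestronglyMeasurable
  have hn : 0 ≤ᵐ[volume] (fun ψ : Fin m → Fin n → ℝ =>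
      Real.exp (-(1 / (2 * d)) * ssiAct n m S R a b ψ)) :=
    Filter.Eventually.of_forall fun ψ => (Real.exp_pos _).le
  rw [integral_eq_lintegral_of_nonneg_ae hn hm, key]
  exact ENNReal.toReal_ofReal (by positivity)

/-- Triangulation independence of the scalar-field state sum on an interval of length `l`
triangulated with `N` edges: integrating out the interior vertex variables gives
`(2πl)^{-n/2} exp(-‖G_{N-1}⋯G_0 φ_0 - φ_N‖²/(2l))` with `G_i = R_iᵀ S_i`, independently
of `N`. -/
theorem scalar_state_sum_interval
    (n N : ℕ) (hn : 1 ≤ n) (hN : 1 ≤ N) (l : ℝ) (hl : 0 < l)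
    (Δt : ℝ) (hΔt : Δt = l / N)
    (S R : Fin N → Matrix (Fin n) (Fin n) ℝ)
    (hS : ∀ i, (S i)ᵀ * S i = 1) (hR : ∀ i, (R i)ᵀ * R i = 1)
    (φ₀ φN : Fin n → ℝ)
    (G : Matrix (Fin n) (Fin n) ℝ)
    (hG : G = ((List.finRange N).reverse.map (fun i => (R i)ᵀ * S i)).prod) :
    (2 * π * Δt) ^ (-(N * n : ℝ) / 2) *
      ∫ ψ : Fin (N - 1) → Fin n → ℝ,
        Real.exp (-(1 / (2 * Δt)) * ∑ i : Fin N, ∑ k,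
          ((S i).mulVec (vertexField n N φ₀ φN ψ i.castSucc) k
            - (R i).mulVec (vertexField n N φ₀ φN ψ i.succ) k) ^ 2)
    = (2 * π * l) ^ (-(n : ℝ) / 2) *
        Real.exp (-(1 / (2 * l)) * ∑ k, (G.mulVec φ₀ k - φN k) ^ 2) := by
  obtain ⟨m, rfl⟩ : ∃ m, N = m + 1 := ⟨N - 1, by omega⟩
  have hd : 0 < Δt := by rw [hΔt]; positivity
  have hld : ((m + 1 : ℕ) : ℝ) * Δt = l := by rw [hΔt]; field_simp
  have hI := ssi_int n m Δt hd φ₀ φN S R hS hR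
  rw [hld] at hI
  have hG' : G = ssiHol n (m + 1) S R := hG
  rw [← hG'] at hI
  clear hG hG'
  have hp : ∀ x : ℝ, 0 < x → ∀ j : ℕ, x ^ (-(j : ℝ) / 2) = (√x ^ j)⁻¹ := by
    intro x hx j
    rw [neg_div, Real.rpow_neg hx.le, Real.sqrt_eq_rpow, ← Real.rpow_natCast, ← Real.rpow_mul hx.le]
    congr 2
    ring
  have e1 := hp (2 * π * Δt) (by positivity) ((m + 1) * n)
  have e2 := hp (2 * π * l) (by positivity) n
  have hpos : (√(2 * π * Δt) ^ n) ^ (m + 1) ≠ 0 := by positivity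
  rw [Nat.cast_mul] at e1
  rw [e1, e2]
  change _ * (∫ ψ : Fin m → Fin n → ℝ, Real.exp (-(1 / (2 * Δt)) * ssiAct n m S R φ₀ φN ψ)) = _
  rw [hI]
  rw [mul_comm (m + 1) n, pow_mul, ← mul_assoc, ← mul_assoc, inv_mul_cancel₀ hpos, one_mul]
end

section
/- Let n ≥ 1, l > 0, and let Q_1, Q_2 be real orthogonal n × n matrices with det(Q_1 − Q_2) ≠ 0. Then (2πl)^{−n/2} ∫_{ℝ^n} exp(−(1/(2l)) ‖Q_1 φ − Q_2 φ‖²) dφ = 1/|det(Q_1 − Q_2)|, where the integral is the Lebesgue integral over ℝ^n. (This is the partition function of the scalar-field state sum model on the circle; it is independent of the length l and of the triangulation.) -/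
open Real MeasureTheory Matrix

/-- The partition function of the scalar-field state sum model on the circle:
`(2πl)^{-n/2} ∫_{ℝⁿ} e^{-‖Q₁φ - Q₂φ‖²/(2l)} dφ = 1/|det(Q₁ - Q₂)|`, independent of the
length `l` and of the triangulation. -/
theorem scalar_state_sum_circle
    (n : ℕ) (hn : 1 ≤ n) (l : ℝ) (hl : 0 < l)
    (Q₁ Q₂ : Matrix (Fin n) (Fin n) ℝ)
    (hQ₁ : Q₁ᵀ * Q₁ = 1) (hQ₂ : Q₂ᵀ * Q₂ = 1)
    (hdet : (Q₁ - Q₂).det ≠ 0) :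
    (2 * π * l) ^ (-(n : ℝ) / 2) *
      ∫ φ : Fin n → ℝ,
        Real.exp (-(∑ k, (Q₁.mulVec φ k - Q₂.mulVec φ k) ^ 2) / (2 * l))
    = 1 / |(Q₁ - Q₂).det| := by
  have hg : ∫ ψ : Fin n → ℝ, Real.exp (-(∑ k, (ψ k) ^ 2) / (2 * l))
      = (2 * π * l) ^ ((n : ℝ) / 2) := by
    have h1 : ∀ ψ : Fin n → ℝ, Real.exp (-(∑ k, (ψ k) ^ 2) / (2 * l))
        = ∏ k, Real.exp (-(1 / (2 * l)) * (ψ k) ^ 2) := by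
      intro ψ
      rw [← Real.exp_sum, ← Finset.mul_sum]
      congr 1
      ring
    simp_rw [h1]
    rw [integral_fintype_prod_volume_eq_pow (fun x : ℝ => Real.exp (-(1 / (2 * l)) * x ^ 2)),
      integral_gaussian, Fintype.card_fin]
    have h2 : π / (1 / (2 * l)) = 2 * π * l := by field_simp
    rw [h2, Real.sqrt_eq_rpow, ← Real.rpow_natCast, ← Real.rpow_mul (by positivity)]
    congr 1
    ring
  have hc : ∫ φ : Fin n → ℝ,
        Real.exp (-(∑ k, (Q₁.mulVec φ k - Q₂.mulVec φ k) ^ 2) / (2 * l))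
      = |(Q₁ - Q₂).det|⁻¹ * ∫ ψ : Fin n → ℝ, Real.exp (-(∑ k, (ψ k) ^ 2) / (2 * l)) := by
    have hm := Real.map_matrix_volume_pi_eq_smul_volume_pi hdet
    have h3 : ∫ ψ, Real.exp (-(∑ k, (ψ k) ^ 2) / (2 * l))
        ∂(Measure.map (Matrix.toLin' (Q₁ - Q₂)) (volume : Measure (Fin n → ℝ)))
        = ∫ φ : Fin n → ℝ,
        Real.exp (-(∑ k, (Q₁.mulVec φ k - Q₂.mulVec φ k) ^ 2) / (2 * l)) := by
      rw [integral_map]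
      · simp [Matrix.sub_mulVec]
      · exact (LinearMap.continuous_of_finiteDimensional _).aemeasurable
      · exact Continuous.aestronglyMeasurable (by fun_prop)
    rw [← h3, hm, integral_smul_measure, ENNReal.toReal_ofReal (abs_nonneg _), abs_inv,
      smul_eq_mul]
  have hp : (0 : ℝ) < 2 * π * l := by positivity
  rw [hc, hg, mul_left_comm, ← Real.rpow_add hp]
  rw [show -(n : ℝ) / 2 + (n : ℝ) / 2 = 0 by ring, Real.rpow_zero]
  simp
end

section
/- Fix a ∈ (0,1) and l > 0, and define G(s) = 2 · (2π/l)^{−2s} · (ζ_H(2s, a) + ζ_H(2s, 1−a)) for complex s, using the analytically continued Hurwitz zeta function. Then G is differentiable at s = 0 and exp(−G′(0)) = (4 sin²(π a))² = 16 sin⁴(π a). (G is the zeta function of the operator L = −d²/dt² − 2A d/dt − A² for a real scalar field minimally coupled to a constant SO(2) gauge field A of holonomy angle 2πa on a circle of circumference l; the eigenvalues of L are (2π(k±a)/l)², k ∈ ℤ, each occurring for two independent eigenfunctions, and the statement computes the zeta-regularised det L, so that the continuum partition function (det L)^{−1/2} equals 1/(4 sin²(πa)), matching the state sum model.) -/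
open HurwitzZeta Complex Real

lemma aux_re_pos {z : ℂ} (hz : ‖z‖ = 1) (hz1 : z ≠ 1) {t : ℝ} (ht : 0 ≤ t) :
    0 < (1 - z * (rexp (-t) : ℂ)).re := by
  have h1 : z.re < 1 := by
    refine lt_of_le_of_ne (hz ▸ Complex.re_le_norm z) fun h => hz1 ?_
    have h2 : z.re * z.re + z.im * z.im = 1 := by
      rw [← Complex.normSq_apply, Complex.normSq_eq_norm_sq, hz]; norm_num
    have h3 : z.im = 0 := by rw [h] at h2; nlinarith
    exact Complex.ext (by simpa using h) (by simpa using h3)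
  have h4 : 0 < rexp (-t) := Real.exp_pos _
  have h5 : rexp (-t) ≤ 1 := by rw [Real.exp_le_one_iff]; linarith
  rw [Complex.sub_re, Complex.re_mul_ofReal, Complex.one_re]
  nlinarith

lemma aux_cont {z : ℂ} (hz : ‖z‖ = 1) (hz1 : z ≠ 1) :
    ContinuousOn (fun t : ℝ => z * (rexp (-t) : ℂ) / (1 - z * (rexp (-t) : ℂ))) (Set.Ici 0) := by
  refine ContinuousOn.div (by fun_prop) (by fun_prop) fun t ht h => ?_
  have := aux_re_pos hz hz1 ht
  rw [h] at this
  simp at this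

lemma aux_tendsto (z : ℂ) :
    Filter.Tendsto (fun t : ℝ => 1 - z * (rexp (-t) : ℂ)) Filter.atTop (nhds 1) := by
  have h : Filter.Tendsto (fun t : ℝ => (rexp (-t) : ℂ)) Filter.atTop (nhds ((0 : ℝ) : ℂ)) :=
    (Complex.continuous_ofReal.tendsto 0).comp Real.tendsto_exp_neg_atTop_nhds_zero
  simpa using (h.const_mul z).const_sub 1

lemma aux_top (z : ℂ) :
    (fun t : ℝ => z * (rexp (-t) : ℂ) / (1 - z * (rexp (-t) : ℂ))) =O[Filter.atTop]
      fun t => rexp (-1 * t) := by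
  have h1 : (fun t : ℝ => (1 - z * (rexp (-t) : ℂ))⁻¹) =O[Filter.atTop] fun _ => (1 : ℝ) :=
    ((aux_tendsto z).inv₀ one_ne_zero).isBigO_one ℝ
  have h2 : (fun t : ℝ => z * (rexp (-t) : ℂ)) =O[Filter.atTop] fun t => rexp (-1 * t) := by
    refine Asymptotics.IsBigO.of_bound ‖z‖ (Filter.Eventually.of_forall fun t => ?_)
    rw [norm_mul, Complex.norm_real, neg_one_mul]
  simpa [div_eq_mul_inv] using h2.mul h1

lemma aux_bot {z : ℂ} (hz : ‖z‖ = 1) (hz1 : z ≠ 1) :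
    (fun t : ℝ => z * (rexp (-t) : ℂ) / (1 - z * (rexp (-t) : ℂ))) =O[nhdsWithin 0 (Set.Ioi 0)]
      fun t => t ^ (-(0 : ℝ)) := by
  simp only [neg_zero, Real.rpow_zero]
  exact (((aux_cont hz hz1) 0 Set.self_mem_Ici).mono Set.Ioi_subset_Ici_self).isBigO_one ℝ

lemma aux_mellin_diff {z : ℂ} (hz : ‖z‖ = 1) (hz1 : z ≠ 1) :
    DifferentiableAt ℂ
      (mellin (fun t : ℝ => z * (rexp (-t) : ℂ) / (1 - z * (rexp (-t) : ℂ)))) 1 :=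
  mellin_differentiableAt_of_isBigO_rpow_exp one_pos
    (((aux_cont hz hz1).mono Set.Ioi_subset_Ici_self).locallyIntegrableOn measurableSet_Ioi)
    (aux_top z) (aux_bot hz hz1) (by simp)

lemma aux_mellin_one {z : ℂ} (hz : ‖z‖ = 1) (hz1 : z ≠ 1) :
    mellin (fun t : ℝ => z * (rexp (-t) : ℂ) / (1 - z * (rexp (-t) : ℂ))) 1
      = -Complex.log (1 - z) := by
  have hc : MellinConvergent
      (fun t : ℝ => z * (rexp (-t) : ℂ) / (1 - z * (rexp (-t) : ℂ))) 1 :=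
    mellinConvergent_of_isBigO_rpow_exp one_pos
      (((aux_cont hz hz1).mono Set.Ioi_subset_Ici_self).locallyIntegrableOn measurableSet_Ioi)
      (aux_top z) (aux_bot hz hz1) (by simp)
  simp only [MellinConvergent, sub_self, Complex.cpow_zero, one_smul] at hc
  simp only [mellin, sub_self, Complex.cpow_zero, one_smul]
  rw [MeasureTheory.integral_Ioi_of_hasDerivAt_of_tendsto'
    (f := fun t : ℝ => Complex.log (1 - z * (rexp (-t) : ℂ))) (m := 0) ?_ hc ?_]
  · simp
  · intro t ht
    have h1 : HasDerivAt (fun t : ℝ => rexp (-t)) (-rexp (-t)) t := by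
      simpa using (hasDerivAt_neg t).exp
    have h2 := (h1.ofReal_comp.const_mul z).const_sub 1
    have h3 := h2.clog_real (Or.inl (aux_re_pos hz hz1 ht))
    convert! h3 using 1
    push_cast
    ring
  · have := (aux_tendsto z).clog (by simp)
    simpa using this

lemma aux_expZeta_one (a : ℝ) (ha : (a : UnitAddCircle) ≠ 0)
    (hz1 : cexp (2 * π * I * a) ≠ 1) :
    expZeta a 1 = -Complex.log (1 - cexp (2 * π * I * a)) := by
  set z := cexp (2 * π * I * a) with hzdef
  have hz : ‖z‖ = 1 := by
    rw [hzdef, show (2 * π * I * a : ℂ) = ((2 * π * a : ℝ) : ℂ) * I by push_cast; ring]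
    exact Complex.norm_exp_ofReal_mul_I _
  have key : ∀ x : ℝ, 1 < x → Complex.Gamma x * expZeta a x =
      mellin (fun t : ℝ => z * (rexp (-t) : ℂ) / (1 - z * (rexp (-t) : ℂ))) x := by
    intro x hx
    have hx' : 1 < (x : ℂ).re := by simpa using hx
    have hs := hasSum_expZeta_of_one_lt_re a hx'
    rw [← hasSum_nat_add_iff' 1] at hs
    have hx0 : (x : ℂ) ≠ 0 := by exact_mod_cast (by linarith : x ≠ 0)
    simp only [Finset.sum_range_one, Nat.cast_zero, Complex.zero_cpow hx0, div_zero,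
      sub_zero] at hs
    have hs2 := hs.mul_left (Complex.Gamma x)
    have hm := hasSum_mellin (a := fun n : ℕ => z ^ (n + 1)) (p := fun n : ℕ => ((n + 1 : ℕ) : ℝ))
      (F := fun t : ℝ => z * (rexp (-t) : ℂ) / (1 - z * (rexp (-t) : ℂ))) (s := x)
      (fun i => Or.inr (by positivity)) (by simp; linarith) ?_ ?_
    · refine hs2.unique ?_
      convert! hm using 2 with n
      rw [hzdef, ← Complex.exp_nat_mul, mul_div_assoc]
      congr 3
      push_cast; ring
    · intro t ht
      have hlt : ‖z * (rexp (-t) : ℂ)‖ < 1 := by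
        rw [norm_mul, hz, one_mul, Complex.norm_real, Real.norm_eq_abs, Real.abs_exp,
          Real.exp_lt_one_iff]
        simpa using ht
      have := (hasSum_geometric_of_norm_lt_one hlt).mul_left (z * (rexp (-t) : ℂ))
      rw [← div_eq_mul_inv] at this
      convert! this using 2 with n
      rw [← pow_succ', mul_pow]
      congr 1
      rw [← Complex.ofReal_pow, ← Real.exp_nat_mul]
      congr 2
      push_cast; ring
    · simp only [norm_pow, hz, one_pow]
      have := (summable_nat_add_iff 1).2 (Real.summable_one_div_nat_rpow.2 hx)
      simpa using this
  have hcast : Filter.Tendsto (fun x : ℝ => (x : ℂ)) (nhdsWithin 1 (Set.Ioi 1)) (nhds 1) := by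
    have := (Complex.continuous_ofReal.tendsto 1).mono_left
      (nhdsWithin_le_nhds (s := Set.Ioi (1 : ℝ)))
    simpa using this
  have hG : ContinuousAt Complex.Gamma 1 := by
    refine (Complex.differentiableAt_Gamma 1 fun m h => ?_).continuousAt
    have := congrArg Complex.re h
    simp at this
    have : (0 : ℝ) ≤ m := m.cast_nonneg
    linarith
  have l1 := (hG.mul (differentiable_expZeta_of_ne_zero ha 1).continuousAt).tendsto.comp hcast
  have l2 := (aux_mellin_diff hz hz1).continuousAt.tendsto.comp hcast
  have := tendsto_nhds_unique (l1.congr' ?_) l2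
  · rw [Pi.mul_apply, Complex.Gamma_one, one_mul, aux_mellin_one hz hz1] at this
    exact this
  · filter_upwards [self_mem_nhdsWithin] with x hx
    exact key x hx

lemma aux_even_deriv (a : UnitAddCircle) (ha : a ≠ 0) :
    HasDerivAt (hurwitzZetaEven a) (cosZeta a 1 / 2) 0 := by
  rw [hasDerivAt_iff_tendsto_slope]
  have h1 : Filter.Tendsto (completedHurwitzZetaEven a) (nhdsWithin 0 {0}ᶜ)
      (nhds (completedHurwitzZetaEven a 0)) :=
    (differentiableAt_completedHurwitzZetaEven a (Or.inr ha) zero_ne_one).continuousAt.tendsto.mono_left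
      nhdsWithin_le_nhds
  have h2 := h1.div Gammaℝ_residue_zero two_ne_zero
  have h3 : cosZeta a 1 = completedHurwitzZetaEven a 0 := by
    rw [cosZeta, Function.update_of_ne one_ne_zero, Gammaℝ_one, div_one,
      ← completedCosZeta_one_sub, sub_zero]
  rw [h3]
  refine h2.congr fun s => ?_
  rw [slope_def_field, hurwitzZetaEven_apply_zero, if_neg ha,
    hurwitzZetaEven_def_of_ne_or_ne (Or.inl ha), sub_zero, sub_zero, div_div, mul_comm]
  rfl



/-- The zeta-regularised determinant of the operator `L = -d²/dt² - 2A d/dt - A²` for a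
real scalar field minimally coupled to a constant `SO(2)` gauge field of holonomy angle
`2πa` on a circle of circumference `l`: with
`G(s) = 2 (2π/l)^{-2s} (ζ_H(2s,a) + ζ_H(2s,1-a))`, the function `G` is differentiable at
`0` and `exp(-G'(0)) = 16 sin⁴(πa)`, so that `(det L)^{-1/2} = 1/(4 sin²(πa))`. -/
theorem scalar_zeta_determinant
    (a l : ℝ) (ha : a ∈ Set.Ioo (0 : ℝ) 1) (hl : 0 < l)
    (G : ℂ → ℂ)
    (hG : ∀ s : ℂ, G s = 2 * ((2 * π / l : ℝ) : ℂ) ^ (-(2 * s)) *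
      (hurwitzZeta (↑a : UnitAddCircle) (2 * s)
        + hurwitzZeta (↑(1 - a) : UnitAddCircle) (2 * s))) :
    DifferentiableAt ℂ G 0 ∧
      Complex.exp (-(deriv G 0)) = (16 * Real.sin (π * a) ^ 4 : ℝ) := by


  obtain ⟨ha0, ha1⟩ := ha
  have hne : (a : UnitAddCircle) ≠ 0 := by
    intro h
    rw [AddCircle.coe_eq_zero_iff] at h
    obtain ⟨n, hn⟩ := h
    simp only [zsmul_eq_mul, mul_one] at hn
    rw [← hn] at ha0 ha1
    have h0 : 0 < n := by exact_mod_cast ha0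
    have h1 : n < 1 := by exact_mod_cast ha1
    omega
  have hneg : ((1 - a : ℝ) : UnitAddCircle) = -(a : UnitAddCircle) := by
    rw [AddCircle.coe_sub, AddCircle.coe_period, zero_sub]
  have hsin : 0 < Real.sin (π * a) :=
    Real.sin_pos_of_pos_of_lt_pi (by positivity) (by nlinarith [Real.pi_pos])
  have hprod : (1 - cexp (2 * π * I * a)) * (1 - cexp (2 * π * I * (-a : ℝ)))
      = ((4 * Real.sin (π * a) ^ 2 : ℝ) : ℂ) := by
    have e1 : cexp (2 * π * I * a) = cexp (π * a * I) ^ 2 := by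
      rw [← Complex.exp_nat_mul]; congr 1; push_cast; ring
    have e2 : cexp (2 * π * I * (-a : ℝ)) = cexp (-(π * a) * I) ^ 2 := by
      rw [← Complex.exp_nat_mul]; congr 1; push_cast; ring
    have e3 : cexp (π * a * I) * cexp (-(π * a) * I) = 1 := by
      rw [← Complex.exp_add, ← Complex.exp_zero]; congr 1; ring
    rw [e1, e2]
    push_cast
    rw [Complex.sin]
    generalize cexp (π * a * I) = u at *
    generalize cexp (-(π * a) * I) = v at *
    linear_combination (u * v - 1) * e3 - (v - u) ^ 2 * Complex.I_sq
  have hpne : (1 - cexp (2 * π * I * a)) * (1 - cexp (2 * π * I * (-a : ℝ))) ≠ 0 := by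
    rw [hprod]
    exact_mod_cast (by positivity : (4 * Real.sin (π * a) ^ 2 : ℝ) ≠ 0)
  have hn1 := left_ne_zero_of_mul hpne
  have hn2 := right_ne_zero_of_mul hpne
  have E1 := aux_expZeta_one a hne (sub_ne_zero.1 hn1).symm
  have E2 := aux_expZeta_one (-a) (by rw [AddCircle.coe_neg]; exact neg_ne_zero.2 hne)
    (sub_ne_zero.1 hn2).symm
  rw [AddCircle.coe_neg] at E2
  have hGeq : G = fun s => 2 * ((2 * π / l : ℝ) : ℂ) ^ (-(2 * s)) *
      (2 * hurwitzZetaEven a (2 * s)) := by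
    funext s
    rw [hG, hneg, hurwitzZeta, hurwitzZeta, hurwitzZetaEven_neg, hurwitzZetaOdd_neg]
    ring
  have hc : ((2 * π / l : ℝ) : ℂ) ≠ 0 := by
    exact_mod_cast (by positivity : (2 * π / l : ℝ) ≠ 0)
  have d0 : HasDerivAt (fun s : ℂ => 2 * s) 2 0 := by
    simpa using (hasDerivAt_id (0 : ℂ)).const_mul 2
  have d1 := (d0.neg.const_cpow (c := ((2 * π / l : ℝ) : ℂ)) (Or.inl hc)).const_mul 2
  have hev : HasDerivAt (hurwitzZetaEven a) (cosZeta a 1 / 2) (2 * 0) := by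
    rw [mul_zero]; exact aux_even_deriv a hne
  have d2 := (hev.comp (0 : ℂ) d0).const_mul 2
  have d3 := d1.mul d2
  have dG : HasDerivAt G (4 * cosZeta a 1) 0 := by
    rw [hGeq]
    convert! d3 using 1
    simp only [Function.comp, Pi.neg_apply, mul_zero, neg_zero, Complex.cpow_zero,
      hurwitzZetaEven_apply_zero, if_neg hne]
    ring
  refine ⟨dG.differentiableAt, ?_⟩
  rw [dG.deriv, cosZeta_eq, E1, E2]
  generalize 1 - cexp (2 * π * I * a) = w1 at *
  generalize 1 - cexp (2 * π * I * (-a : ℝ)) = w2 at *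
  have : -(4 * ((-Complex.log w1 + -Complex.log w2) / 2))
      = ((2 : ℕ) : ℂ) * (Complex.log w1 + Complex.log w2) := by push_cast; ring
  rw [this, Complex.exp_nat_mul, Complex.exp_add, Complex.exp_log hn1, Complex.exp_log hn2, hprod]
  push_cast
  ring
end

section
/- Let η = diag(1,1,1,0) be the degenerate 4 × 4 bilinear form, and for x, y ∈ ℝ⁴ and a 4 × 4 real matrix W define L(x, W, y) = Σ_{σ ∈ S₄} sign(σ) · x_{σ(1)} · W_{σ(2)σ(3)} · y_{σ(4)} (i.e. ε_{ABCD} x^A W^{BC} y^D with ε the Levi-Civita symbol on four indices). Then for every invertible 4 × 4 real matrix V with det V = 1 and V η Vᵀ = η, and every 4 × 4 real matrix Z, L(V x, (V Z V^{−1}) η, V y) = L(x, Z η, y). (This is the ISO(3) gauge invariance of the discrete Lagrangian L_e = −(Q_e φ_{s(e)})^A (log H_e)^{BC} ε_{ABCD} φ^D_{f(e)} of the quantum ISO(3) gravity model: under the gauge transformation Q_e ↦ U_{f(e)}^{−1} Q_e U_{s(e)}, the holonomy logarithm transforms by conjugation and the per-edge Lagrangian is unchanged.) -/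
open Matrix

/-- The degenerate bilinear form `η = diag(1,1,1,0)` of the 4-dimensional matrix
representation of `ISO(3)`. -/
noncomputable def isoEta : Matrix (Fin 4) (Fin 4) ℝ :=
  Matrix.diagonal (fun i => if i = 3 then 0 else 1)

/-- `L(x, W, y) = ε_{ABCD} x^A W^{BC} y^D`, the Levi-Civita contraction on four indices. -/
noncomputable def epsContract (x : Fin 4 → ℝ) (W : Matrix (Fin 4) (Fin 4) ℝ)
    (y : Fin 4 → ℝ) : ℝ :=
  ∑ σ : Equiv.Perm (Fin 4),
    ((Equiv.Perm.sign σ : ℤ) : ℝ) * x (σ 0) * W (σ 1) (σ 2) * y (σ 3)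

theorem epsContract_sum_aux (x y : Fin 4 → ℝ) (u w : Fin 4 → Fin 4 → ℝ)
    (W : Matrix (Fin 4) (Fin 4) ℝ) (hW : ∀ i j, W i j = ∑ c, u c i * w c j) :
    epsContract x W y = ∑ c, (Matrix.of ![x, u c, w c, y]).det := by
  simp only [← Matrix.det_transpose (Matrix.of _), Matrix.det_apply]
  rw [Finset.sum_comm]
  unfold epsContract
  refine Finset.sum_congr rfl fun σ _ => ?_
  rw [hW, Finset.mul_sum, Finset.sum_mul]
  refine Finset.sum_congr rfl fun c _ => ?_
  simp [Fin.prod_univ_four, Units.smul_def]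
  ring

theorem det_rows_mulVec_aux (V : Matrix (Fin 4) (Fin 4) ℝ) (hV : V.det = 1)
    (x u w y : Fin 4 → ℝ) :
    (Matrix.of ![V.mulVec x, V.mulVec u, V.mulVec w, V.mulVec y]).det
      = (Matrix.of ![x, u, w, y]).det := by
  have h : Matrix.of ![V.mulVec x, V.mulVec u, V.mulVec w, V.mulVec y]
      = Matrix.of ![x, u, w, y] * Vᵀ := by
    ext i j
    fin_cases i <;> simp [Matrix.mul_apply, Matrix.mulVec, dotProduct, mul_comm]
  rw [h, Matrix.det_mul, Matrix.det_transpose, hV, mul_one]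

/-- `ISO(3)` gauge invariance of the discrete Lagrangian
`L_e = -(Q_e φ_{s(e)})^A (log H_e)^{BC} ε_{ABCD} φ^D_{f(e)}`: for every `V` with
`det V = 1` and `V η Vᵀ = η`, and every matrix `Z`,
`L(Vx, (V Z V⁻¹) η, Vy) = L(x, Z η, y)`. -/
theorem discrete_lagrangian_gauge_invariant
    (V : Matrix (Fin 4) (Fin 4) ℝ) (hVdet : V.det = 1)
    (hVeta : V * isoEta * Vᵀ = isoEta)
    (Z : Matrix (Fin 4) (Fin 4) ℝ) (x y : Fin 4 → ℝ) :
    epsContract (V.mulVec x) ((V * Z * V⁻¹) * isoEta) (V.mulVec y)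
      = epsContract x (Z * isoEta) y := by
  have hu : IsUnit V.det := by rw [hVdet]; exact isUnit_one
  have h1 : V⁻¹ * isoEta = isoEta * Vᵀ := by
    calc V⁻¹ * isoEta = V⁻¹ * (V * isoEta * Vᵀ) := by rw [hVeta]
      _ = (V⁻¹ * V) * (isoEta * Vᵀ) := by simp only [Matrix.mul_assoc]
      _ = _ := by rw [Matrix.nonsing_inv_mul V hu, Matrix.one_mul]
  have h2 : V * Z * V⁻¹ * isoEta = V * (Z * isoEta) * Vᵀ := by
    rw [Matrix.mul_assoc (V * Z), h1]; simp only [Matrix.mul_assoc]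
  rw [h2]
  generalize Z * isoEta = W
  rw [epsContract_sum_aux x y (fun c i => W i c) (fun c => Pi.single c 1) W
      (by intro i j; simp [Pi.single_apply]),
    epsContract_sum_aux (V.mulVec x) (V.mulVec y) (fun c => V.mulVec (fun i => W i c))
      (fun c => V.mulVec (Pi.single c 1)) (V * W * Vᵀ)
      (by intro i j; simp [Matrix.mul_apply, Matrix.mulVec, dotProduct, Pi.single_apply])]
  exact Finset.sum_congr rfl fun c _ => det_rows_mulVec_aux V hVdet _ _ _ _
end

section
/- Let K be a field of characteristic zero (e.g. ℂ), n ≥ 1, N ≥ 1, and let Q_0, …, Q_{N−1} be n × n matrices over K. Let V be the K-vector space with basis {b_{j,i}, a_{j,i} : 0 ≤ j ≤ N−1, 1 ≤ i ≤ n}, and in the exterior algebra Λ(V) set ω = Σ_{j=0}^{N−1} ( Σ_{i} b_{j,i} ∧ a_{j,i} − Σ_{i,k} (Q_j)_{ik} · b_{j,i} ∧ a_{(j+1) mod N, k} ). Then ω^{Nn} = (Nn)! · det(I_n − Q_0 Q_1 ⋯ Q_{N−1}) · ⋀_{j=0}^{N−1} (b_{j,1} ∧ a_{j,1} ∧ ⋯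 ∧ b_{j,n} ∧ a_{j,n}). (This is the fermionic state sum model on a circle triangulated with N edges: the Berezin integral Z = ∫ ∏_j dψ_j dψ̄_j exp(Σ_j [ψ̄_j ψ_j − ψ̄_j Q_j ψ_{j+1}]) equals det(I − Q) where Q = Q_0 ⋯ Q_{N−1} is the holonomy, independently of the triangulation.) -/
open ExteriorAlgebra

theorem fss_add_pow {A : Type*} [Ring A] (x S : A) (h : Commute x S) (hx : x * x = 0) (m : ℕ) :
    (x + S) ^ (m + 1) = S ^ (m + 1) + ((m + 1 : ℕ) : A) * (x * S ^ m) := by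
  induction m with
  | zero => simp [add_comm]
  | succ m ih =>
    rw [pow_succ', ih]
    have e1 : x * (((m + 1 : ℕ) : A) * (x * S ^ m)) = 0 := by
      rw [← mul_assoc, ← Nat.cast_comm, mul_assoc, ← mul_assoc x x, hx]; simp
    have e2 : S * (((m + 1 : ℕ) : A) * (x * S ^ m)) = ((m + 1 : ℕ) : A) * (x * S ^ (m + 1)) := by
      rw [← mul_assoc, ← Nat.cast_comm, mul_assoc, ← mul_assoc S x, ← h.eq, mul_assoc, ← pow_succ']
    rw [add_mul, mul_add, mul_add, e1, e2, ← pow_succ']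
    push_cast
    noncomm_ring

theorem fss_list {A : Type*} [Ring A] (l : List A) (hc : ∀ x ∈ l, ∀ y ∈ l, Commute x y)
    (hs : ∀ x ∈ l, x * x = 0) :
    l.sum ^ (l.length + 1) = 0 ∧ l.sum ^ l.length = ((l.length.factorial : ℕ) : A) * l.prod := by
  induction l with
  | nil => simp
  | cons x l ih =>
    obtain ⟨h1, h2⟩ := ih (fun y hy z hz => hc y (by simp [hy]) z (by simp [hz]))
      (fun y hy => hs y (by simp [hy]))
    have hx : x * x = 0 := hs x (by simp)
    have hcs : Commute x l.sum := Commute.list_sum_right _ _ fun y hy => hc x (by simp) y (by simp [hy])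
    simp only [List.sum_cons, List.length_cons, List.prod_cons]
    rw [fss_add_pow x _ hcs hx, fss_add_pow x _ hcs hx, pow_succ, h1, h2]
    refine ⟨by simp, ?_⟩
    rw [Nat.factorial_succ, zero_add, ← mul_assoc x, ← Nat.cast_comm]
    push_cast
    simp only [mul_assoc]

section
variable {K V : Type*} [Field K] [AddCommGroup V] [Module K V]

theorem fss_anti (u v : V) : ι K u * ι K v = - (ι K v * ι K u) :=
  eq_neg_of_add_eq_zero_left (ι_add_mul_swap u v)

theorem fss_comm (u v w z : V) : Commute (ι K u * ι K v) (ι K w * ι K z) := by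
  have h1 : ∀ t : V, Commute (ι K u * ι K v) (ι K t) := by
    intro t
    show ι K u * ι K v * ι K t = ι K t * (ι K u * ι K v)
    rw [mul_assoc, fss_anti v t, mul_neg, ← mul_assoc, fss_anti u t]
    simp [mul_assoc]
  exact (h1 w).mul_right (h1 z)

theorem fss_zero (u v w : V) : (ι K u * ι K v) * (ι K w * ι K v) = 0 := by
  rw [fss_anti w v, mul_neg, mul_assoc, ← mul_assoc (ι K v), ι_sq_zero]; simp

theorem fss_prod_zero (m : ℕ) (b v : Fin m → V) (i j : Fin m) (hv : v i = v j) (hij : i ≠ j) :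
    (List.ofFn fun i => ι K (b i) * ι K (v i)).prod = 0 := by
  have hc : ((List.finRange m).toFinset : Set (Fin m)).Pairwise
      (Function.onFun Commute fun i => ι K (b i) * ι K (v i)) :=
    fun _ _ _ _ _ => fss_comm _ _ _ _
  rw [List.ofFn_eq_map, ← Finset.noncommProd_toFinset _ _ hc (List.nodup_finRange m),
    ← Finset.mul_noncommProd_erase (List.finRange m).toFinset (a := i) (by simp) _ hc,
    ← Finset.mul_noncommProd_erase ((List.finRange m).toFinset.erase i) (a := j)
      (by simp [hij.symm]) (fun i => ι K (b i) * ι K (v i))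
      (fun _ _ _ _ _ => fss_comm _ _ _ _), ← mul_assoc, hv, fss_zero,
    zero_mul]

noncomputable def fssAlt (m : ℕ) (b : Fin m → V) : V [⋀^Fin m]→ₗ[K] ExteriorAlgebra K V :=
  { (MultilinearMap.mkPiAlgebraFin K m (ExteriorAlgebra K V)).compLinearMap
      (fun i => (LinearMap.mulLeft K (ι K (b i))) ∘ₗ ι K) with
    map_eq_zero_of_eq' := by
      intro v i j hv hij
      have := fss_prod_zero (K := K) m b v i j hv hij
      simpa using this }

theorem fssAlt_apply (m : ℕ) (b v : Fin m → V) :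
    fssAlt (K := K) m b v = (List.ofFn fun i => ι K (b i) * ι K (v i)).prod := by
  change ((MultilinearMap.mkPiAlgebraFin K m (ExteriorAlgebra K V)).compLinearMap
      (fun i => (LinearMap.mulLeft K (ι K (b i))) ∘ₗ ι K)) v = _
  simp

theorem fss_det {m : ℕ} {W : Type*} [AddCommGroup W] [Module K W] (f : V [⋀^Fin m]→ₗ[K] W)
    (a : Fin m → V) (M : Matrix (Fin m) (Fin m) K) :
    f (fun i => ∑ k, M i k • a k) = M.det • f a := by
  let L : (Fin m → K) →ₗ[K] V := Fintype.linearCombination K a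
  have key : f.compLinearMap L =
      (LinearMap.toSpanSingleton K W (f a)).compAlternatingMap Matrix.detRowAlternating := by
    refine Module.Basis.ext_alternating (Pi.basisFun K (Fin m)) fun v hv => ?_
    let σ : Equiv.Perm (Fin m) := Equiv.ofBijective v (Finite.injective_iff_bijective.mp hv)
    have hσ : (fun i => (Pi.basisFun K (Fin m)) (v i)) = (Pi.basisFun K (Fin m)) ∘ σ := rfl
    rw [hσ, AlternatingMap.map_perm, AlternatingMap.map_perm]
    congr 1
    have h1 : (fun i => L (Pi.basisFun K (Fin m) i)) = a := by
      funext i; simp [L, Fintype.linearCombination_apply_single]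
    have h2 : Matrix.detRowAlternating (R := K) (⇑(Pi.basisFun K (Fin m))) = 1 := by
      have : (⇑(Pi.basisFun K (Fin m))) = (1 : Matrix (Fin m) (Fin m) K) := by
        ext i j; simp [Matrix.one_apply, Pi.single_apply, eq_comm]
      rw [this]; exact Matrix.det_one
    simp only [AlternatingMap.compLinearMap_apply, LinearMap.compAlternatingMap_apply, h1, h2]
    simp
  have h := congrArg (fun g => g (fun i => M i)) key
  exact h

theorem fss_main (m : ℕ) (b a : Fin m → V) (M : Matrix (Fin m) (Fin m) K) :
    (∑ i, ∑ k, M i k • (ι K (b i) * ι K (a k))) ^ m =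
      ((m.factorial : K) * M.det) • (List.ofFn fun i => ι K (b i) * ι K (a i)).prod := by
  have h := (fss_list (List.ofFn fun i => ι K (b i) * ι K (∑ k, M i k • a k))
    (by
      intro x hx y hy
      obtain ⟨i, rfl⟩ := List.mem_ofFn.mp hx
      obtain ⟨j, rfl⟩ := List.mem_ofFn.mp hy
      exact fss_comm _ _ _ _)
    (by
      intro x hx
      obtain ⟨i, rfl⟩ := List.mem_ofFn.mp hx
      exact fss_zero _ _ _)).2
  rw [List.length_ofFn, List.sum_ofFn, ← fssAlt_apply, fss_det, fssAlt_apply] at h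
  rw [← nsmul_eq_mul, ← Nat.cast_smul_eq_nsmul K] at h
  rw [mul_smul, ← h]
  congr 1
  refine Finset.sum_congr rfl fun i _ => ?_
  simp [Finset.mul_sum]

def fssM (n N : ℕ) [NeZero N] (Q : Fin N → Matrix (Fin n) (Fin n) K) :
    Matrix (Fin N × Fin n) (Fin N × Fin n) K :=
  1 - Matrix.of fun p q => if q.1 = p.1 + 1 then Q p.1 p.2 q.2 else 0

theorem fss_detM (n N : ℕ) [NeZero N] (Q : Fin N → Matrix (Fin n) (Fin n) K) :
    (fssM n N Q).det = (1 - ((List.finRange N).map Q).prod).det := by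
  let U : Matrix (Fin N × Fin n) (Fin N × Fin n) K :=
    Matrix.of fun p q => if (q.1 : ℕ) = p.1 + 1 then Q p.1 p.2 q.2 else 0
  let P : ℕ → Matrix (Fin n) (Fin n) K := fun j => (((List.finRange N).drop j).map Q).prod
  have hP : ∀ j : Fin N, P j = Q j * P (j + 1) := by
    intro j
    simp only [P]
    rw [List.drop_eq_getElem_cons (by simp)]
    simp
  have hPN : P N = 1 := by
    simp only [P]
    rw [List.drop_of_length_le (by simp)]; simp
  let W : Matrix (Fin N × Fin n) (Fin n) K := Matrix.of fun p k => P p.1 p.2 k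
  let C : Matrix (Fin n) (Fin N × Fin n) K := Matrix.of fun k q => if q.1 = 0 ∧ q.2 = k then 1 else 0
  let B : Matrix (Fin N × Fin n) (Fin n) K :=
    Matrix.of fun p k => if (p.1 : ℕ) + 1 = N then Q p.1 p.2 k else 0
  have hTW : (1 - U) * W = B := by
    rw [Matrix.sub_mul, Matrix.one_mul]
    ext ⟨j, i⟩ k
    simp only [Matrix.sub_apply, Matrix.mul_apply, U, W, B, Matrix.of_apply, Fintype.sum_prod_type]
    rw [hP j]
    by_cases hj : (j : ℕ) + 1 = N
    · rw [if_pos hj, hj, hPN, Finset.sum_eq_zero]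
      · simp
      · intro x _
        have : ¬ ((x : ℕ) = N) := by omega
        simp [this]
    · rw [if_neg hj, Finset.sum_eq_single (⟨j + 1, by omega⟩ : Fin N)]
      · simp [Matrix.mul_apply]
      · intro x _ hx
        have : ¬ ((x : ℕ) = j + 1) := fun h => hx (Fin.ext h)
        simp [this]
      · simp
  have hM : fssM n N Q = (1 - U) * (1 - W * C) := by
    rw [Matrix.mul_sub, Matrix.mul_one, ← Matrix.mul_assoc, hTW, sub_sub, fssM]
    congr 1
    ext ⟨j, i⟩ ⟨j', k⟩
    simp only [Matrix.add_apply, Matrix.mul_apply, U, B, C, Matrix.of_apply]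
    have hBC : (∑ x, (if (j : ℕ) + 1 = N then Q j i x else 0) *
        (if j' = 0 ∧ k = x then (1 : K) else 0)) =
        if (j : ℕ) + 1 = N ∧ j' = 0 then Q j i k else 0 := by
      by_cases h1 : (j : ℕ) + 1 = N <;> by_cases h2 : j' = 0 <;> simp [h1, h2]
    rw [hBC]
    have hv : ((j + 1 : Fin N) : ℕ) = (j + 1) % N := by
      rw [Fin.val_add, Fin.val_one', Nat.add_mod_mod]
    by_cases h1 : (j : ℕ) + 1 = N
    · have e : j + 1 = 0 := Fin.ext (by rw [hv, h1]; simp)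
      have h3 : ¬ ((j' : ℕ) = j + 1) := by omega
      rw [if_neg h3, zero_add, e]
      by_cases h4 : j' = 0
      · rw [if_pos h4, if_pos ⟨h1, h4⟩]
      · rw [if_neg h4, if_neg (fun h => h4 h.2)]
    · rw [Nat.mod_eq_of_lt (by omega)] at hv
      rw [if_neg (c := (j : ℕ) + 1 = N ∧ j' = 0) (fun h => h1 h.1), add_zero]
      have h5 : j' = j + 1 ↔ (j' : ℕ) = j + 1 := by rw [Fin.ext_iff, hv]
      simp only [h5]
  have hT : (1 - U).det = 1 := by
    have hbt : (1 - U).BlockTriangular Prod.fst := by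
      rintro ⟨j, i⟩ ⟨j', k⟩ h
      simp only at h
      have h1 : ¬ ((j' : ℕ) = j + 1) := by have : (j' : ℕ) < j := h; omega
      have h2 : j ≠ j' := h.ne'
      simp [U, Matrix.one_apply, h1, h2]
    rw [hbt.det_fintype]
    refine Finset.prod_eq_one fun k _ => ?_
    have : (1 - U).toSquareBlock Prod.fst k = 1 := by
      ext ⟨⟨j, i⟩, h⟩ ⟨⟨j', i'⟩, h'⟩
      simp only at h h'
      subst h h'
      simp [Matrix.toSquareBlock_def, U, Matrix.one_apply]
    rw [this, Matrix.det_one]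
  have hCW : C * W = ((List.finRange N).map Q).prod := by
    ext i k
    simp only [Matrix.mul_apply, C, W, Matrix.of_apply, Fintype.sum_prod_type]
    rw [Finset.sum_eq_single (0 : Fin N)]
    · simp [P]
    · intro x _ hx
      simp [hx]
    · simp
  rw [hM, Matrix.det_mul, hT, one_mul, Matrix.det_one_sub_mul_comm, hCW]

end

/-- The fermionic state sum model on a circle triangulated with `N` edges, in
exterior-algebra form: for
`ω = Σ_j (Σ_i b_{j,i} ∧ a_{j,i} − Σ_{i,k} (Q_j)_{ik} b_{j,i} ∧ a_{(j+1) mod N, k})`,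
`ω^{Nn} = (Nn)! · det(I − Q_0 ⋯ Q_{N−1}) · ⋀_j (b_{j,1} ∧ a_{j,1} ∧ ⋯ ∧ b_{j,n} ∧ a_{j,n})`,
i.e. the Berezin integral of `exp ω` equals `det (I - Q)` with `Q` the holonomy. -/
theorem fermionic_state_sum_circle
    (K : Type*) [Field K] [CharZero K] (n N : ℕ) (hn : 1 ≤ n) (hN : 1 ≤ N) [NeZero N]
    (Q : Fin N → Matrix (Fin n) (Fin n) K)
    (b a : Fin N × Fin n → ((Fin N × Fin n ⊕ Fin N × Fin n) → K))
    (hb : ∀ p, b p = Pi.single (Sum.inl p) 1)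
    (ha : ∀ p, a p = Pi.single (Sum.inr p) 1)
    (ω : ExteriorAlgebra K ((Fin N × Fin n ⊕ Fin N × Fin n) → K))
    (hω : ω = ∑ j : Fin N,
      ((∑ i : Fin n, ι K (b (j, i)) * ι K (a (j, i)))
        - ∑ i : Fin n, ∑ k : Fin n,
            Q j i k • (ι K (b (j, i)) * ι K (a (j + 1, k))))) :
    ω ^ (N * n) = (((N * n).factorial : K) *
        ((1 : Matrix (Fin n) (Fin n) K) - ((List.finRange N).map Q).prod).det) •
      ((List.finRange N).map (fun j =>
        ((List.finRange n).map (fun i => ι K (b (j, i)) * ι K (a (j, i)))).prod)).prod := by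
  have hM := fss_main (K := K) (N * n) (b ∘ finProdFinEquiv.symm) (a ∘ finProdFinEquiv.symm)
    (Matrix.reindex finProdFinEquiv finProdFinEquiv (fssM n N Q))
  rw [Matrix.det_reindex_self, fss_detM] at hM
  have h1 : ω = ∑ i, ∑ k, (Matrix.reindex finProdFinEquiv finProdFinEquiv (fssM n N Q)) i k •
      (ι K ((b ∘ finProdFinEquiv.symm) i) * ι K ((a ∘ finProdFinEquiv.symm) k)) := by
    rw [hω, ← Equiv.sum_comp (finProdFinEquiv (m := N) (n := n)), Fintype.sum_prod_type]
    refine Finset.sum_congr rfl fun j _ => ?_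
    rw [← Finset.sum_sub_distrib]
    refine Finset.sum_congr rfl fun i _ => ?_
    rw [← Equiv.sum_comp (finProdFinEquiv (m := N) (n := n))]
    simp only [Matrix.reindex_apply, Matrix.submatrix_apply, Equiv.symm_apply_apply,
      Function.comp_apply, fssM, Matrix.sub_apply, sub_smul, Finset.sum_sub_distrib,
      Matrix.of_apply]
    congr 1
    · simp [Matrix.one_apply]
    · rw [Fintype.sum_prod_type, Finset.sum_eq_single (j + 1)]
      · simp
      · intro x _ hx
        simp [hx]
      · simp
  have h2 : (List.ofFn fun i => ι K ((b ∘ finProdFinEquiv.symm) i) *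
      ι K ((a ∘ finProdFinEquiv.symm) i)).prod = ((List.finRange N).map (fun j =>
        ((List.finRange n).map (fun i => ι K (b (j, i)) * ι K (a (j, i)))).prod)).prod := by
    rw [List.ofFn_mul, List.prod_flatten, List.map_ofFn, List.ofFn_eq_map]
    congr 1
    refine List.map_congr_left fun j _ => ?_
    simp only [Function.comp_apply, List.ofFn_eq_map]
    congr 1
    refine List.map_congr_left fun i _ => ?_
    have : ∀ h, finProdFinEquiv.symm (⟨(j : ℕ) * n + i, h⟩ : Fin (N * n)) = (j, i) := by
      intro h
      rw [Equiv.symm_apply_eq]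
      ext
      simp [finProdFinEquiv]; ring
    rw [this]
  rw [h1, hM, h2]
end
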